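/- Let A be a Noetherian local ring and M a nonzero finite A-module. If I ⊆ m_A is an ideal generated by an M-independent sequence of length n with n ≥ edim(A) (the minimal number of generators of m_A), then n = edim(A). -/

import Mathlib

open IsLocalRing

/-- The embedding dimension of a local ring: the minimal number of generators of its
maximal ideal. -/
noncomputable def edim (A : Type) [CommRing A] [IsLocalRing A] : ℕ :=
  sInf {k : ℕ | ∃ y : Fin k → A, Ideal.span (Set.range y) = maximalIdeal A}

/-!
Suppose `x₁, …, xₙ` is `M`-independent, generates the ideal `I`, and consists of linear
combinations of `y₁, …, y_d`: say `xᵢ = aᵢ(y)` for a linear form `aᵢ` on `E = A^d`. The modules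
`Kₚ` of alternating `p`-forms on `E` with values in `M`, with contraction against `y`, form the
Koszul complex of `y` with coefficients in `M`. If `n > d`, descending induction on `p` shows that
`a_{i₁} ∧ ⋯ ∧ a_{iₚ} ⊗ m` lies in `I Kₚ + ∂ Kₚ₊₁` for all distinct `i₁, …, iₚ` and all `m`. This is
clear for `p = n`, as `Kₙ = 0`. For `p < n`, wedge with `a_k` for a new index `k` and contract: the
result is a combination of `xₖ, x_{i₁}, …, x_{iₚ}` in which `xₖ` has the coefficient
`a_{i₁} ∧ ⋯ ∧ a_{iₚ} ⊗ m`, and by induction it lies in `I ∂ Kₚ₊₁`. As `x` is also `Kₚ`-independent,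
this coefficient lies in `I Kₚ + ∂ Kₚ₊₁`. For `p = 0` this gives `M = (y) M`, which contradicts
Nakayama's lemma if `(y)` is the maximal ideal.
-/

section Independent

variable {A M N P ι κ : Type*} [CommRing A] [AddCommGroup M] [Module A M] [AddCommGroup N]
  [Module A N] [AddCommGroup P] [Module A P] [Fintype ι] [Fintype κ] {x : ι → A}

/-- A finite family `x` in `A` is `M`-independent if the coefficients of every linear relation
between its members, with coefficients in `M`, lie in `I M`, where `I` is the ideal generated
by `x`. -/
def MIndependent (M : Type*) [AddCommGroup M] [Module A M] (x : ι → A) : Prop :=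
  ∀ m : ι → M, ∑ i, x i • m i = 0 → ∀ i, m i ∈ Ideal.span (Set.range x) • (⊤ : Submodule A M)

theorem mem_ideal_span_range_smul_iff {S : Submodule A M} {u : M} :
    u ∈ Ideal.span (Set.range x) • S ↔ ∃ c : ι → M, (∀ i, c i ∈ S) ∧ ∑ i, x i • c i = u := by
  constructor
  · refine fun hu => Submodule.smul_induction_on hu (fun r hr v hv => ?_) ?_
    · obtain ⟨c, rfl⟩ := Ideal.mem_span_range_iff_exists_fun.1 hr
      exact ⟨fun i => c i • v, fun i => S.smul_mem _ hv,
        by simp only [Finset.sum_smul, smul_smul, mul_comm]⟩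
    · rintro _ _ ⟨c, hc, rfl⟩ ⟨d, hd, rfl⟩
      exact ⟨c + d, fun i => S.add_mem (hc i) (hd i),
        by simp only [Pi.add_apply, smul_add, Finset.sum_add_distrib]⟩
  · rintro ⟨c, hc, rfl⟩
    exact sum_mem fun i _ =>
      Submodule.smul_mem_smul (Ideal.subset_span (Set.mem_range_self i)) (hc i)

namespace MIndependent

theorem of_linearEquiv (hx : MIndependent M x) (e : M ≃ₗ[A] N) : MIndependent N x := by
  intro m hm i
  have hsymm : ∑ i, x i • e.symm (m i) = 0 := by
    simpa only [map_sum, map_smul, map_zero] using congrArg e.symm hm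
  simpa using Submodule.smul_top_le_comap_smul_top _ e.toLinearMap (hx _ hsymm i)

theorem linearMap [Module.Projective A P] (hx : MIndependent M x) :
    MIndependent (P →ₗ[A] M) x := by
  intro f hf i
  let s : (ι → M) →ₗ[A] M := ∑ j, x j • LinearMap.proj j
  have hrange (p : P) : f i p ∈ LinearMap.range s := by
    have hp : ∑ j, x j • f j p = 0 := by simpa using LinearMap.congr_fun hf p
    obtain ⟨c, -, hc⟩ := mem_ideal_span_range_smul_iff.1 (hx _ hp i)
    exact ⟨c, by simpa [s] using hc⟩
  obtain ⟨g, hg⟩ := Module.projective_lifting_property s.rangeRestrict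
    ((f i).codRestrict _ hrange) s.surjective_rangeRestrict
  refine mem_ideal_span_range_smul_iff.2 ⟨fun j => LinearMap.proj j ∘ₗ g, by simp, ?_⟩
  ext p
  simpa [s] using congrArg Subtype.val (LinearMap.congr_fun hg p)

theorem alternatingMap [Module.Free A P] (hx : MIndependent M x) (p : ℕ) :
    MIndependent (P [⋀^Fin p]→ₗ[A] M) x :=
  (hx.linearMap (P := ⋀[A]^p P)).of_linearEquiv exteriorPower.alternatingMapLinearEquiv.symm

theorem mem_smul_top_sup (hx : MIndependent M x) {e : κ → ι} (he : Function.Injective e)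
    {m : κ → M} {S : Submodule A M}
    (hm : ∑ k, x (e k) • m k ∈ Ideal.span (Set.range x) • S) (k : κ) :
    m k ∈ Ideal.span (Set.range x) • (⊤ : Submodule A M) ⊔ S := by
  obtain ⟨c, hc, hcm⟩ := mem_ideal_span_range_smul_iff.1 hm
  have hsum : ∑ k, x (e k) • m k = ∑ i, x i • Function.extend e m 0 i :=
    Fintype.sum_of_injective e he _ _
      (fun i hi => by rw [Function.extend_apply' m (0 : ι → M) i hi, Pi.zero_apply, smul_zero])
      (fun k => by rw [he.extend_apply])
  have hrel : ∑ i, x i • (Function.extend e m 0 i - c i) = 0 := by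
    simp only [smul_sub, Finset.sum_sub_distrib, ← hsum, hcm, sub_self]
  have hmem := Submodule.add_mem_sup (hx _ hrel (e k)) (hc (e k))
  rwa [sub_add_cancel, he.extend_apply] at hmem

end MIndependent

end Independent

section Koszul

variable {A E M ι κ : Type*} [CommRing A] [AddCommGroup E] [Module A E] [AddCommGroup M]
  [Module A M] {p : ℕ}

/-- Contraction of alternating maps against `y`, the differential of the Koszul complex of `y`
with coefficients in `M`; the `p`-chains are encoded as alternating maps of `p` variables. -/
def koszulDifferential (y : E) (p : ℕ) : E [⋀^Fin (p + 1)]→ₗ[A] M →ₗ[A] E [⋀^Fin p]→ₗ[A] M :=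
  AlternatingMap.curryLeftLinearMap.flip y

theorem koszulDifferential_koszulDifferential (y : E) (f : E [⋀^Fin (p + 2)]→ₗ[A] M) :
    koszulDifferential y p (koszulDifferential y (p + 1) f) = 0 :=
  f.curryLeft_same y

/-- The decomposable element `a₀ ∧ ⋯ ∧ aₚ₋₁ ⊗ m` of the Koszul complex, as the alternating map
`v ↦ det (aⱼ (vᵢ)) • m`. -/
def wedgeTensor (a : Fin p → Module.Dual A E) (m : M) : E [⋀^Fin p]→ₗ[A] M :=
  (LinearMap.toSpanSingleton A M m).compAlternatingMap
    (Matrix.detRowAlternating.compLinearMap (LinearMap.pi a))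

theorem wedgeTensor_apply (a : Fin p → Module.Dual A E) (m : M) (v : Fin p → E) :
    wedgeTensor a m v = (Matrix.of fun i j => a j (v i)).det • m :=
  rfl

theorem alternatingMap_sum_apply (s : Finset ι) (f : ι → E [⋀^Fin p]→ₗ[A] M) (v : Fin p → E) :
    (∑ j ∈ s, f j) v = ∑ j ∈ s, f j v :=
  (DFunLike.congr_fun (map_sum (AlternatingMap.toMultilinearMapLM (S := A)) f s) v).trans
    (sum_apply ..)

theorem koszulDifferential_wedgeTensor (y : E) (a : Fin (p + 1) → Module.Dual A E) (m : M) :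
    koszulDifferential y p (wedgeTensor a m) =
      ∑ j, a j y • (-1 : A) ^ (j : ℕ) • wedgeTensor (fun i => a (j.succAbove i)) m := by
  ext v
  change wedgeTensor a m (Fin.cons y v) = _
  simp only [wedgeTensor_apply, Matrix.det_succ_row_zero, Finset.sum_smul,
    alternatingMap_sum_apply, AlternatingMap.smul_apply, smul_smul]
  refine Finset.sum_congr rfl fun j _ => ?_
  rw [mul_comm ((-1) ^ (j : ℕ))]
  rfl

theorem alternatingMap_eq_zero_of_card_lt [Fintype κ] (b : Module.Basis κ A E)
    (hp : Fintype.card κ < p) (f : E [⋀^Fin p]→ₗ[A] M) : f = 0 :=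
  b.ext_alternating fun v hv => by
    have hle := Fintype.card_le_of_injective v hv
    rw [Fintype.card_fin] at hle
    exact absurd hp hle.not_gt

theorem linearMap_apply_mem_ideal_span_smul_top [Finite κ] (g : (κ → A) →ₗ[A] M) (y : κ → A) :
    g y ∈ Ideal.span (Set.range y) • (⊤ : Submodule A M) := by
  classical
  have := Fintype.ofFinite κ
  rw [LinearMap.pi_apply_eq_sum_univ g y]
  exact mem_ideal_span_range_smul_iff.2 ⟨_, fun _ => Submodule.mem_top, rfl⟩

variable [Fintype ι] [Fintype κ]

theorem MIndependent.wedgeTensor_mem (b : Module.Basis κ A E) {y : E} {a : ι → Module.Dual A E}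
    (hx : MIndependent M fun i => a i y) (hcard : Fintype.card κ < Fintype.card ι) (m : M)
    {s : Fin p → ι} (hs : Function.Injective s) :
    wedgeTensor (fun i => a (s i)) m ∈
      Ideal.span (Set.range fun i => a i y) • (⊤ : Submodule A (E [⋀^Fin p]→ₗ[A] M)) ⊔
        LinearMap.range (koszulDifferential y p) := by
  have := Module.Free.of_basis b
  have hp : p ≤ Fintype.card ι := by simpa using Fintype.card_le_of_injective s hs
  induction hp using Nat.decreasingInduction with
  | self =>
    rw [alternatingMap_eq_zero_of_card_lt b hcard (wedgeTensor _ m)]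
    exact zero_mem _
  | of_succ p hp ih =>
    obtain ⟨k, hk⟩ : ∃ k, k ∉ Set.range s := by
      by_contra! hsurj
      have hle := Fintype.card_le_of_surjective s hsurj
      rw [Fintype.card_fin] at hle
      omega
    have hks : Function.Injective (Fin.cons k s : Fin (p + 1) → ι) :=
      Fin.cons_injective_of_injective hk hs
    obtain ⟨u, hu, _, ⟨h, rfl⟩, huh⟩ := Submodule.mem_sup.1 (ih hks)
    have hdu : koszulDifferential y p u ∈ Ideal.span (Set.range fun i => a i y) •
        LinearMap.range (koszulDifferential (M := M) y p) := by
      rw [LinearMap.range_eq_map, ← Submodule.map_smul'']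
      exact Submodule.mem_map_of_mem hu
    have hd := congrArg (koszulDifferential y p) huh
    rw [map_add, koszulDifferential_koszulDifferential, add_zero,
      koszulDifferential_wedgeTensor] at hd
    rw [hd] at hdu
    simpa using (hx.alternatingMap p).mem_smul_top_sup hks hdu 0

theorem MIndependent.span_smul_top_eq_top {x : ι → A} (hx : MIndependent M x) {y : κ → A}
    (hxy : ∀ i, x i ∈ Ideal.span (Set.range y)) (hcard : Fintype.card κ < Fintype.card ι) :
    Ideal.span (Set.range y) • (⊤ : Submodule A M) = ⊤ := by
  choose c hc using fun i => Ideal.mem_span_range_iff_exists_fun.1 (hxy i)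
  let a (i : ι) : Module.Dual A (κ → A) := Fintype.linearCombination A (c i)
  obtain rfl : (fun i => a i y) = x := by
    ext i
    simp [a, ← hc, Fintype.linearCombination_apply, mul_comm]
  refine eq_top_iff.2 fun m _ => ?_
  obtain ⟨u, hu, _, ⟨g, rfl⟩, hug⟩ := Submodule.mem_sup.1 <|
    hx.wedgeTensor_mem (Pi.basisFun A κ) hcard m (s := Fin.elim0)
      (Function.injective_of_subsingleton _)
  let evalEmpty : (κ → A) [⋀^Fin 0]→ₗ[A] M →ₗ[A] M :=
    AlternatingMap.constLinearEquivOfIsEmpty.symm.toLinearMap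
  have hm : evalEmpty u + (evalEmpty ∘ₗ g.curryLeft) y = m := by
    have hwedge : evalEmpty (wedgeTensor (fun i => a (Fin.elim0 i)) m) = m := by
      simp [evalEmpty, wedgeTensor_apply]
    rw [← hwedge, ← hug, map_add]
    rfl
  have hle : Ideal.span (Set.range fun i => a i y) ≤ Ideal.span (Set.range y) :=
    Ideal.span_le.2 (Set.range_subset_iff.2 hxy)
  rw [← hm]
  exact add_mem
    (Submodule.smul_mono_left hle (Submodule.smul_top_le_comap_smul_top _ evalEmpty hu))
    (linearMap_apply_mem_ideal_span_smul_top _ y)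

end Koszul

theorem exists_span_range_eq_maximalIdeal {A : Type} [CommRing A] [IsLocalRing A]
    (hfg : (maximalIdeal A).FG) :
    ∃ y : Fin (edim A) → A, Ideal.span (Set.range y) = maximalIdeal A :=
  Nat.sInf_mem (Submodule.fg_iff_exists_fin_generating_family.1 hfg)

theorem independent_length_eq_edim_general {A : Type} [CommRing A] [IsLocalRing A]
    (hfg : (maximalIdeal A).FG) {M : Type*} [AddCommGroup M] [Module A M] [Module.Finite A M]
    [Nontrivial M] {ι : Type*} [Fintype ι] {x : ι → A} (hxm : ∀ i, x i ∈ maximalIdeal A)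
    (hx : MIndependent M x) : Fintype.card ι ≤ edim A := by
  obtain ⟨y, hy⟩ := exists_span_range_eq_maximalIdeal hfg
  by_contra! hlt
  have htop : maximalIdeal A • (⊤ : Submodule A M) = ⊤ :=
    hy ▸ hx.span_smul_top_eq_top (fun i => hy ▸ hxm i) (by rwa [Fintype.card_fin])
  exact Submodule.top_ne_ideal_smul_of_le_jacobson_annihilator
    (maximalIdeal_le_jacobson _) htop.symm

/-- If a nonzero finite module `M` over a Noetherian local ring admits an `M`-independent
sequence of length `n ≥ edim A` inside `𝔪`, then `n = edim A`. -/
theorem independent_length_eq_edim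
    {A : Type} [CommRing A] [IsLocalRing A] [IsNoetherianRing A]
    {M : Type} [AddCommGroup M] [Module A M] [Module.Finite A M] [Nontrivial M]
    {n : ℕ} (x : Fin n → A) (hxm : ∀ i, x i ∈ maximalIdeal A)
    (hind : ∀ m : Fin n → M, (∑ i, x i • m i) = 0 →
      ∀ i, m i ∈ Ideal.span (Set.range x) • (⊤ : Submodule A M))
    (hge : edim A ≤ n) :
    n = edim A := by
  have hle := independent_length_eq_edim_general (IsNoetherian.noetherian _) hxm hind
  exact le_antisymm (by rwa [Fintype.card_fin] at hle) hge
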